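/- For each ε ∈ {+1, −1}, let Φ_ε = 1⊗1⊗1 + (ε − 1)·e1⊗e1⊗e1 ∈ Q⊗Q⊗Q, where e1 = (1 − K²)/2. Then there is no invertible element R ∈ Q⊗Q such that R·Δ(a) = Δ^op(a)·R for all a ∈ Q and both hexagon identities relative to Φ_ε hold: (Δ⊗id)(R) = (Φ_ε)₂₃₁^{-1}·R₁₃·(Φ_ε)₁₃₂·R₂₃·Φ_ε^{-1} and (id⊗Δ)(R) = (Φ_ε)₃₁₂·R₁₃·(Φ_ε)₂₁₃^{-1}·R₁₂·Φ_ε. That is, the quasi-bialgebra (Q, Φ_ε) is not quasi-triangular for either choice of ε. -/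

import Mathlib

open TensorProduct

set_option maxHeartbeats 1000000
set_option synthInstance.maxHeartbeats 400000

noncomputable section

/-- Generators of the restricted quantum group `Q = \bar U_i sl(2)`. -/
inductive QGen : Type
  | E | F | K | Kinv
deriving DecidableEq

/-- The free algebra on the generators. -/
abbrev FA : Type := FreeAlgebra ℂ QGen

def ιE : FA := FreeAlgebra.ι ℂ QGen.E
def ιF : FA := FreeAlgebra.ι ℂ QGen.F
def ιK : FA := FreeAlgebra.ι ℂ QGen.K
def ιKi : FA := FreeAlgebra.ι ℂ QGen.Kinv

/-- Defining relations of `\bar U_i sl(2)` (at `q = i`, i.e. `p = 2`). -/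
inductive QRel : FA → FA → Prop
  | KKi : QRel (ιK * ιKi) 1
  | KiK : QRel (ιKi * ιK) 1
  | KEKi : QRel (ιK * ιE * ιKi) (-ιE)
  | KFKi : QRel (ιK * ιF * ιKi) (-ιF)
  | EF : QRel (ιE * ιF - ιF * ιE) ((2 * Complex.I)⁻¹ • (ιK - ιKi))
  | Esq : QRel (ιE ^ 2) 0
  | Fsq : QRel (ιF ^ 2) 0
  | K4 : QRel (ιK ^ 4) 1

/-- The restricted quantum group `\bar U_i sl(2)`: the quotient of the free algebra
by the two-sided ideal generated by the defining relations. -/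
abbrev Q : Type := RingQuot QRel

def gE : Q := RingQuot.mkAlgHom ℂ QRel ιE
def gF : Q := RingQuot.mkAlgHom ℂ QRel ιF
def gK : Q := RingQuot.mkAlgHom ℂ QRel ιK
def gKi : Q := RingQuot.mkAlgHom ℂ QRel ιKi

section Gadgets

variable (k : Type) [Field k] (A : Type) [Ring A] [Algebra k A]

abbrev TP2 : Type := A ⊗[k] A
abbrev TP3 : Type := A ⊗[k] (A ⊗[k] A)
abbrev TP4 : Type := A ⊗[k] (A ⊗[k] (A ⊗[k] A))

/-- Multiplication `a ⊗ b ↦ a * b`. -/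
def mulA : TP2 k A →ₗ[k] A := LinearMap.mul' k A

/-- Tensor flip `a ⊗ b ↦ b ⊗ a`. -/
def flipA : TP2 k A →ₗ[k] TP2 k A := (TensorProduct.comm k A A).toLinearMap

/-- `a ↦ a ⊗ 1`. -/
def lTen : A →ₗ[k] TP2 k A := (TensorProduct.mk k A A).flip 1

/-- `a ↦ 1 ⊗ a`. -/
def rTen : A →ₗ[k] TP2 k A := TensorProduct.mk k A A 1

/-- `a ⊗ b ↦ a ⊗ b ⊗ 1`. -/
def emb12 : TP2 k A →ₗ[k] TP3 k A := TensorProduct.map LinearMap.id (lTen k A)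

/-- `a ⊗ b ↦ a ⊗ 1 ⊗ b`. -/
def emb13 : TP2 k A →ₗ[k] TP3 k A := TensorProduct.map LinearMap.id (rTen k A)

/-- `a ⊗ b ↦ 1 ⊗ a ⊗ b`. -/
def emb23 : TP2 k A →ₗ[k] TP3 k A := TensorProduct.mk k A (TP2 k A) 1

/-- `a ⊗ b ⊗ c ↦ a ⊗ c ⊗ b`. -/
def perm132 : TP3 k A →ₗ[k] TP3 k A := TensorProduct.map LinearMap.id (flipA k A)

/-- `a ⊗ b ⊗ c ↦ b ⊗ c ⊗ a`. -/
def perm231 : TP3 k A →ₗ[k] TP3 k A :=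
  (TensorProduct.assoc k A A A).toLinearMap ∘ₗ (TensorProduct.comm k A (TP2 k A)).toLinearMap

/-- `a ⊗ b ⊗ c ↦ c ⊗ a ⊗ b`. -/
def perm312 : TP3 k A →ₗ[k] TP3 k A :=
  (TensorProduct.comm k (TP2 k A) A).toLinearMap ∘ₗ (TensorProduct.assoc k A A A).symm.toLinearMap

/-- `a ⊗ b ⊗ c ↦ b ⊗ a ⊗ c`. -/
def perm213 : TP3 k A →ₗ[k] TP3 k A :=
  (TensorProduct.assoc k A A A).toLinearMap ∘ₗ
    (TensorProduct.map (flipA k A) LinearMap.id) ∘ₗ (TensorProduct.assoc k A A A).symm.toLinearMap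

variable {k A}

/-- `(Δ ⊗ id)` on two tensor factors, landing in the triple tensor product. -/
def copL (D : A →ₐ[k] TP2 k A) : TP2 k A →ₗ[k] TP3 k A :=
  (TensorProduct.assoc k A A A).toLinearMap ∘ₗ TensorProduct.map D.toLinearMap LinearMap.id

/-- `(id ⊗ Δ)` on two tensor factors. -/
def copR (D : A →ₐ[k] TP2 k A) : TP2 k A →ₗ[k] TP3 k A :=
  TensorProduct.map LinearMap.id D.toLinearMap

/-- `(ε ⊗ id) : A ⊗ A → A`. -/
def cuL (ce : A →ₐ[k] k) : TP2 k A →ₗ[k] A :=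
  (TensorProduct.lid k A).toLinearMap ∘ₗ TensorProduct.map ce.toLinearMap LinearMap.id

/-- `(id ⊗ ε) : A ⊗ A → A`. -/
def cuR (ce : A →ₐ[k] k) : TP2 k A →ₗ[k] A :=
  (TensorProduct.rid k A).toLinearMap ∘ₗ TensorProduct.map LinearMap.id ce.toLinearMap

/-- `(id ⊗ ε ⊗ id) : A ⊗ A ⊗ A → A ⊗ A`. -/
def cuMid (ce : A →ₐ[k] k) : TP3 k A →ₗ[k] TP2 k A :=
  TensorProduct.map LinearMap.id (cuL ce)

/-- `(Δ ⊗ id ⊗ id)`. -/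
def cop4_1 (D : A →ₐ[k] TP2 k A) : TP3 k A →ₗ[k] TP4 k A :=
  (TensorProduct.assoc k A A (TP2 k A)).toLinearMap ∘ₗ TensorProduct.map D.toLinearMap LinearMap.id

/-- `(id ⊗ Δ ⊗ id)`. -/
def cop4_2 (D : A →ₐ[k] TP2 k A) : TP3 k A →ₗ[k] TP4 k A :=
  TensorProduct.map LinearMap.id (copL D)

/-- `(id ⊗ id ⊗ Δ)`. -/
def cop4_3 (D : A →ₐ[k] TP2 k A) : TP3 k A →ₗ[k] TP4 k A :=
  TensorProduct.map LinearMap.id (copR D)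

/-- `a ⊗ b ⊗ c ↦ a ⊗ b ⊗ c ⊗ 1`, i.e. `Φ ↦ Φ ⊗ 1`. -/
def pad4 : TP3 k A →ₗ[k] TP4 k A :=
  TensorProduct.map LinearMap.id (TensorProduct.map LinearMap.id (lTen k A))

/-- `a ⊗ b ⊗ c ↦ f(a) * g(b) * h(c)`. -/
def tmap3 (f g h : A →ₗ[k] A) : TP3 k A →ₗ[k] A :=
  mulA k A ∘ₗ TensorProduct.map f (mulA k A ∘ₗ TensorProduct.map g h)

/-- `a ⊗ b ↦ S(a) * b`, used in the antipode axiom `m ∘ (S ⊗ id) ∘ Δ = 1·ε`. -/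
def antipL (s : A →ₗ[k] A) : TP2 k A →ₗ[k] A := mulA k A ∘ₗ TensorProduct.map s LinearMap.id

/-- `a ⊗ b ↦ a * S(b)`. -/
def antipR (s : A →ₗ[k] A) : TP2 k A →ₗ[k] A := mulA k A ∘ₗ TensorProduct.map LinearMap.id s

end Gadgets

/-- Central idempotent `e₀ = (1 + K²)/2`. -/
def e0 : Q := (2:ℂ)⁻¹ • (1 + gK ^ 2)

/-- Central idempotent `e₁ = (1 − K²)/2`. -/
def e1 : Q := (2:ℂ)⁻¹ • (1 - gK ^ 2)

/-- `f⁺ = −i F`. -/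
def fp : Q := (-Complex.I) • gF

/-- `f⁻ = E K⁻¹`. -/
def fm : Q := gE * gKi

/-- The Casimir element `C = FE − (i/4)(K − K⁻¹)`. -/
def Cas : Q := gF * gE - (Complex.I / 4) • (gK - gKi)

def t2 (a b : Q) : TP2 ℂ Q := a ⊗ₜ[ℂ] b

def t3 (a b c : Q) : TP3 ℂ Q := a ⊗ₜ[ℂ] (b ⊗ₜ[ℂ] c)

def eEF : Q := gE * gF
def eEK : Q := gE * gK
def eFK : Q := gF * gK
def eEFK : Q := gE * gF * gK

/-- `Φ^{010}` component of the coassociator. -/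
def Phi010 : TP3 ℂ Q :=
  t3 1 1 1 - (1 + Complex.I) • t3 gE gK gF + (1 - Complex.I) • t3 eFK gK eEK
    + (2:ℂ) • t3 eEFK 1 eEFK

/-- `Φ^{101}` component of the coassociator. -/
def Phi101 : TP3 ℂ Q :=
  (Complex.I - 1) • t3 1 gF eEK + t3 1 gK 1 + (2:ℂ) • t3 1 eEF eEFK
    - (1 + Complex.I) • t3 1 eEK gF - (1 + Complex.I) • t3 gE eFK 1
    + (2 * Complex.I) • t3 gE eEFK gF + (1 - Complex.I) • t3 eFK gE 1
    - (2 * Complex.I) • t3 eFK eEFK eEK - (2:ℂ) • t3 eEFK eEF 1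

/-- `Φ^{111}` component of the coassociator. -/
def Phi111 (β : ℂ) : TP3 ℂ Q :=
  (Complex.I * β ^ 2) • (
    (1 + Complex.I) • t3 1 gF eEK - t3 1 gK 1 - (2:ℂ) • t3 1 eEF 1
      - (2 * Complex.I) • t3 1 eEF eEFK + (1 + Complex.I) • t3 1 eEK gF
      - (1 + Complex.I) • t3 gE 1 gF + (1 + Complex.I) • t3 gE eFK 1
      + (2 * Complex.I) • t3 gE eFK eEFK + (2:ℂ) • t3 gE eEFK gF
      - (1 + Complex.I) • t3 eFK 1 eEK + (1 + Complex.I) • t3 eFK gE 1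
      + (2 * Complex.I) • t3 eFK gE eEFK + (2:ℂ) • t3 eFK eEFK eEK
      + (2 * Complex.I) • t3 eEFK gF eEK + (2 * Complex.I) • t3 eEFK gK eEFK
      - (2 * Complex.I) • t3 eEFK eEF 1 + (2 * Complex.I) • t3 eEFK eEK gF
      + (4:ℂ) • t3 eEFK eEF eEFK)

/-- The coassociator `Φ` of the quasi-Hopf algebra structure on `Q`. -/
def Phi (β : ℂ) : TP3 ℂ Q :=
  t3 e0 e0 e0 + t3 e1 e0 e0 + Phi010 * t3 e0 e1 e0 + t3 e0 e0 e1
    + t3 e1 e1 e0 + Phi101 * t3 e1 e0 e1 + t3 e0 e1 e1 + Phi111 β * t3 e1 e1 e1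

def R00 : TP2 ℂ Q :=
  (2:ℂ)⁻¹ • ((t2 1 1 + t2 1 gK + t2 gK 1 - t2 gK gK) * (t2 1 1 + (2 * Complex.I) • t2 gE gF))

def R01 : TP2 ℂ Q :=
  (2:ℂ)⁻¹ • ((t2 1 1 - Complex.I • t2 1 gK + t2 gK 1 + Complex.I • t2 gK gK) *
    (t2 1 1 + (1 - Complex.I) • t2 eFK eEK - (1 - Complex.I) • t2 gE gF
      + (1 + Complex.I) • t2 eEFK 1 + (2 * Complex.I) • t2 eEFK eEFK))

def R10 : TP2 ℂ Q :=
  (2:ℂ)⁻¹ • ((t2 1 1 + t2 1 gK - Complex.I • t2 gK 1 + Complex.I • t2 gK gK) *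
    (t2 1 gK + (1 - Complex.I) • t2 eFK gE + (1 - Complex.I) • t2 gE eFK
      - (1 - Complex.I) • t2 1 eEF - (2 * Complex.I) • t2 eEFK eEF))

def R11 (β : ℂ) : TP2 ℂ Q :=
  (β / 2) • ((t2 1 1 - Complex.I • t2 1 gK - Complex.I • t2 gK 1 + t2 gK gK) *
    ((-Complex.I) • t2 gK 1 + (2 * Complex.I) • t2 eEK gF + (1 - Complex.I) • t2 gK eEFK
      - (1 + Complex.I) • t2 eEF 1 - (2 * Complex.I) • t2 eEF eEFK))

/-- The universal R-matrix `R` of the quasi-triangular quasi-Hopf structure on `Q`. -/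
def Rmat (β : ℂ) : TP2 ℂ Q :=
  R00 * t2 e0 e0 + R01 * t2 e0 e1 + R10 * t2 e1 e0 + R11 β * t2 e1 e1

/-- The standard R-matrix `R_st` of the quotient `Q/(K²-1)`. -/
def Rst : TP2 ℂ Q :=
  (2:ℂ)⁻¹ • ∑ m ∈ Finset.range 2, ∑ n ∈ Finset.range 2,
    ((-1:ℂ) ^ (m * n)) • (t2 (gK ^ m) (gK ^ n) * (t2 1 1 + (2 * Complex.I) • t2 gE gF))

/-- The monodromy matrix `M = R₂₁ · R`. -/
def Mmat (β : ℂ) : TP2 ℂ Q := flipA ℂ Q (Rmat β) * Rmat β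

/-- The ribbon element `v = (e₀ − iβ K e₁)(1 − 2 f⁺ f⁻)`. -/
def vRib (β : ℂ) : Q := (e0 - (Complex.I * β) • (gK * e1)) * (1 - (2:ℂ) • (fp * fm))

/-- The coevaluation element `β = e₀ − 2iβ² C e₁`. -/
def bbEl (β : ℂ) : Q := e0 - (2 * Complex.I * β ^ 2) • (Cas * e1)

/-- `b ⊗ c ↦ S(b · bb · S(c))`, inner part of the Drinfeld element. -/
def uInner (S : Q →ₗ[ℂ] Q) (bb : Q) : TP2 ℂ Q →ₗ[ℂ] Q :=
  S ∘ₗ mulA ℂ Q ∘ₗ TensorProduct.map (LinearMap.mulRight ℂ bb) S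

/-- `Φ' ⊗ Φ'' ⊗ Φ''' ↦ S(Φ'' · bb · S(Φ''')) ⊗ Φ'`. -/
def uMap1 (S : Q →ₗ[ℂ] Q) (bb : Q) : TP3 ℂ Q →ₗ[ℂ] TP2 ℂ Q :=
  TensorProduct.map (uInner S bb) LinearMap.id ∘ₗ (TensorProduct.comm ℂ Q (TP2 ℂ Q)).toLinearMap

/-- `R' ⊗ R'' ↦ S(R'') · al · R'`. -/
def uMap2 (S : Q →ₗ[ℂ] Q) (al : Q) : TP2 ℂ Q →ₗ[ℂ] Q :=
  mulA ℂ Q ∘ₗ TensorProduct.map (LinearMap.mulRight ℂ al ∘ₗ S) LinearMap.id ∘ₗ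
    (TensorProduct.comm ℂ Q Q).toLinearMap

/-- `(x ⊗ a) ⊗ (R' ⊗ R'') ↦ x · (S(R'') · al · R') · a`. -/
def uBig (S : Q →ₗ[ℂ] Q) (al : Q) : TP2 ℂ Q ⊗[ℂ] TP2 ℂ Q →ₗ[ℂ] Q :=
  mulA ℂ Q ∘ₗ TensorProduct.map LinearMap.id (mulA ℂ Q ∘ₗ (TensorProduct.comm ℂ Q Q).toLinearMap)
    ∘ₗ (TensorProduct.assoc ℂ Q Q Q).toLinearMap ∘ₗ TensorProduct.map LinearMap.id (uMap2 S al)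

/-- The Drinfeld element `u = Σ S(Φ''·b·S(Φ'''))·S(R'')·α·R'·Φ'` (with `α = 1`). -/
def uDrin (β : ℂ) (S : Q →ₗ[ℂ] Q) : Q :=
  uBig S 1 (uMap1 S (bbEl β) (Phi β) ⊗ₜ[ℂ] Rmat β)

/-- The balancing element `g = b · S(α) · v⁻¹ · u` (with `α = 1`). -/
def balG (β : ℂ) (S : Q →ₗ[ℂ] Q) : Q :=
  bbEl β * S 1 * Ring.inverse (vRib β) * uDrin β S

/-- The cointegral `c = (β²/i)·E·F·(1 + K + K² + K³)`. -/
def cInt (β : ℂ) : Q := (β ^ 2 / Complex.I) • (gE * gF * (1 + gK + gK ^ 2 + gK ^ 3))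

/-- The q-trace of a one-dimensional representation, with balancing element `K⁻¹`. -/
def qTr1 (ρ : Q →ₐ[ℂ] ℂ) : Q →ₗ[ℂ] ℂ := ρ.toLinearMap ∘ₗ LinearMap.mulLeft ℂ gK

/-- The q-trace of a two-dimensional (matrix) representation, with balancing element `K⁻¹`. -/
def qTrM (ρ : Q →ₐ[ℂ] Matrix (Fin 2) (Fin 2) ℂ) : Q →ₗ[ℂ] ℂ :=
  Matrix.traceLinearMap (Fin 2) ℂ ℂ ∘ₗ ρ.toLinearMap ∘ₗ LinearMap.mulLeft ℂ gK

/-- The Drinfeld mapping `φ ↦ (φ ⊗ id)(M)`. -/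
def drinfeldImg (β : ℂ) (φ : Q →ₗ[ℂ] ℂ) : Q :=
  (TensorProduct.lid ℂ Q) (TensorProduct.map φ LinearMap.id (Mmat β))

/-!
A character `χ` of an algebra turns an R-matrix `R` into the element `x_χ = (id ⊗ χ)(R)`. If the
coassociator becomes trivial when `χ` is applied to any one of its slots, then the first hexagon
says that `x_χ` is group-like, and the second that `χ ↦ x_χ` turns products of characters into
products of elements.

For `Q`, take the character `E, F ↦ 0`, `K ↦ -1`. Its square is the counit, so `x² = 1`, and the
intertwining property makes `x` anticommute with `E` and `F`. In the two-dimensional representation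
`K ↦ diag(i, -i)` this forces `x ↦ ±diag(1, -1)`, and then `x ⊗ x` acts by `-1` on the invariant
vector of the tensor square of the representation. But a group-like element of counit `1` fixes
that vector.
-/

section Units

variable {k A : Type*} [Field k] [Ring A] [Algebra k A]

lemma one_add_smul_mul_one_add_smul {p : A} (hp : IsIdempotentElem p) (c d : k) :
    (1 + (c - 1) • p) * (1 + (d - 1) • p) = 1 + (c * d - 1) • p := by
  rw [add_mul, mul_add, mul_add, smul_mul_smul_comm, hp.eq, one_mul, one_mul, mul_one]
  module

lemma isUnit_one_add_smul {p : A} (hp : IsIdempotentElem p) {c : k} (hc : c ≠ 0) :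
    IsUnit (1 + (c - 1) • p) :=
  ⟨⟨1 + (c - 1) • p, 1 + (c⁻¹ - 1) • p,
    by simp [one_add_smul_mul_one_add_smul hp, hc],
    by simp [one_add_smul_mul_one_add_smul hp, hc]⟩, rfl⟩

lemma map_ringInverse_eq_one {M N F : Type*} [MonoidWithZero M] [Monoid N] [FunLike F M N]
    [MonoidHomClass F M N] {f : F} {u : M} (hu : IsUnit u) (hf : f u = 1) :
    f (Ring.inverse u) = 1 := by
  simpa [hf] using congrArg f (Ring.mul_inverse_cancel u hu)

end Units

section Contractions

variable {k A : Type} [Field k] [Ring A] [Algebra k A]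

/-- The contraction `id ⊗ χ : A ⊗ A → A` of the second tensor factor by a character:
the linear map `cuR χ`, as an algebra homomorphism. -/
def evalSnd (χ : A →ₐ[k] k) : TP2 k A →ₐ[k] A :=
  (Algebra.TensorProduct.rid k k A).toAlgHom.comp (Algebra.TensorProduct.map (AlgHom.id k A) χ)

/-- The contraction `id ⊗ id ⊗ χ : A ⊗ A ⊗ A → A ⊗ A` of the third tensor factor by a
character. -/
def evalThd (χ : A →ₐ[k] k) : TP3 k A →ₐ[k] TP2 k A :=
  Algebra.TensorProduct.map (AlgHom.id k A) (evalSnd χ)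

/-- The product `a ↦ (χ ⊗ ψ)(D a)` of two characters with respect to a coproduct `D`. -/
def conv (D : A →ₐ[k] TP2 k A) (χ ψ : A →ₐ[k] k) : A →ₐ[k] k :=
  χ.comp ((evalSnd ψ).comp D)

variable (χ ψ : A →ₐ[k] k) (D : A →ₐ[k] TP2 k A)

@[simp]
lemma evalSnd_tmul (a b : A) : evalSnd χ (a ⊗ₜ[k] b) = χ b • a := by
  simp [evalSnd]

@[simp]
lemma evalThd_tmul (a : A) (t : TP2 k A) : evalThd χ (a ⊗ₜ[k] t) = a ⊗ₜ[k] evalSnd χ t := by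
  simp [evalThd]

@[simp]
lemma conv_apply (a : A) : conv D χ ψ a = χ (evalSnd ψ (D a)) := rfl

@[simp]
lemma flipA_tmul (a b : A) : flipA k A (a ⊗ₜ[k] b) = b ⊗ₜ[k] a := rfl

lemma flipA_one : flipA k A 1 = 1 := rfl

lemma evalThd_assoc (t : TP2 k A) (c : A) :
    evalThd χ (TensorProduct.assoc k A A A (t ⊗ₜ[k] c)) = χ c • t := by
  induction t using TensorProduct.induction_on with
  | zero => simp
  | add s t hs ht => simp only [add_tmul, map_add, hs, ht, smul_add]
  | tmul a b => simp

lemma evalThd_copL (R : TP2 k A) : evalThd χ (copL D R) = D (evalSnd χ R) := by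
  induction R using TensorProduct.induction_on with
  | zero => simp
  | add s t hs ht => simp only [map_add, hs, ht]
  | tmul a b => simp [copL, evalThd_assoc]

lemma evalSnd_evalThd_copR (R : TP2 k A) :
    evalSnd χ (evalThd ψ (copR D R)) = evalSnd (conv D χ ψ) R := by
  induction R using TensorProduct.induction_on with
  | zero => simp
  | add s t hs ht => simp only [map_add, hs, ht]
  | tmul a b => simp [copR]

lemma evalThd_emb12 (R : TP2 k A) : evalThd χ (emb12 k A R) = R := by
  induction R using TensorProduct.induction_on with
  | zero => simp
  | add s t hs ht => simp only [map_add, hs, ht]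
  | tmul a b => simp [emb12, lTen]

lemma evalThd_emb13 (R : TP2 k A) : evalThd χ (emb13 k A R) = evalSnd χ R ⊗ₜ[k] 1 := by
  induction R using TensorProduct.induction_on with
  | zero => simp
  | add s t hs ht => simp only [map_add, hs, ht, add_tmul]
  | tmul a b => simp [emb13, rTen, smul_tmul']

lemma evalThd_emb23 (R : TP2 k A) : evalThd χ (emb23 k A R) = 1 ⊗ₜ[k] evalSnd χ R := by
  simp [emb23]

lemma evalThd_perm213 (Φ : TP3 k A) : evalThd χ (perm213 k A Φ) = flipA k A (evalThd χ Φ) := by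
  obtain ⟨Ψ, rfl⟩ := (TensorProduct.assoc k A A A).surjective Φ
  induction Ψ using TensorProduct.induction_on with
  | zero => simp
  | add s t hs ht => simp only [map_add, hs, ht]
  | tmul t c => simp [perm213, evalThd_assoc]

lemma evalThd_perm312 (Φ : TP3 k A) :
    evalThd χ (perm312 k A Φ) = flipA k A (evalThd χ (perm132 k A Φ)) := by
  obtain ⟨Ψ, rfl⟩ := (TensorProduct.assoc k A A A).surjective Φ
  induction Ψ using TensorProduct.induction_on with
  | zero => simp
  | add s t hs ht => simp only [map_add, hs, ht]
  | tmul t c =>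
    induction t using TensorProduct.induction_on with
    | zero => simp
    | add s t hs ht => simp only [add_tmul, map_add, hs, ht]
    | tmul a b => simp [perm312, perm132, smul_tmul']

lemma isUnit_perm231 {Φ : TP3 k A} (hΦ : IsUnit Φ) : IsUnit (perm231 k A Φ) :=
  hΦ.map ((Algebra.TensorProduct.comm k A (TP2 k A)).trans
    (Algebra.TensorProduct.assoc k k k A A A))

lemma isUnit_perm213 {Φ : TP3 k A} (hΦ : IsUnit Φ) : IsUnit (perm213 k A Φ) :=
  hΦ.map (((Algebra.TensorProduct.assoc k k k A A A).symm.trans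
    (Algebra.TensorProduct.congr (Algebra.TensorProduct.comm k A A) AlgEquiv.refl)).trans
    (Algebra.TensorProduct.assoc k k k A A A))

/-- The element `Φ` of `A ⊗ A ⊗ A` becomes `1 ⊗ 1` when the character `χ` is applied to any one of
its slots. A coassociator is trivial at the counit. -/
structure IsTrivialAt (χ : A →ₐ[k] k) (Φ : TP3 k A) : Prop where
  first : evalThd χ (perm231 k A Φ) = 1
  second : evalThd χ (perm132 k A Φ) = 1
  third : evalThd χ Φ = 1

namespace IsTrivialAt

variable {χ} {Φ : TP3 k A} (h : IsTrivialAt χ Φ)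

include h

lemma evalThd_perm213 : evalThd χ (perm213 k A Φ) = 1 := by
  rw [_root_.evalThd_perm213, h.third, flipA_one]

lemma evalThd_perm312 : evalThd χ (perm312 k A Φ) = 1 := by
  rw [_root_.evalThd_perm312, h.second, flipA_one]

end IsTrivialAt

end Contractions

section RMatrix

variable {k A : Type} [Field k] [Ring A] [Algebra k A]

/-- `R` is a universal R-matrix for the coproduct `D` and the coassociator `Φ`: it is invertible,
intertwines `D` with the opposite coproduct, and satisfies both hexagon identities. As `Φ` enters
through `Ring.inverse`, this is meaningful only for invertible `Φ`. -/
structure IsRMatrix (D : A →ₐ[k] TP2 k A) (Φ : TP3 k A) (R : TP2 k A) : Prop where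
  isUnit : IsUnit R
  intertwines : ∀ a : A, R * D a = flipA k A (D a) * R
  hexagon_left : copL D R =
    Ring.inverse (perm231 k A Φ) * emb13 k A R * perm132 k A Φ * emb23 k A R * Ring.inverse Φ
  hexagon_right : copR D R =
    perm312 k A Φ * emb13 k A R * Ring.inverse (perm213 k A Φ) * emb12 k A R * Φ

lemma conv_apply_of_grouplike {D : A →ₐ[k] TP2 k A} {x : A} (hx : D x = x ⊗ₜ[k] x)
    (χ ψ : A →ₐ[k] k) : conv D χ ψ x = χ x * ψ x := by
  rw [conv_apply, hx, evalSnd_tmul, map_smul, smul_eq_mul, mul_comm]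

namespace IsRMatrix

variable {D : A →ₐ[k] TP2 k A} {Φ : TP3 k A} {R : TP2 k A} (h : IsRMatrix D Φ R)
  {χ ψ : A →ₐ[k] k}

include h

lemma evalSnd_mul_evalSnd_coproduct (a : A) :
    evalSnd χ R * evalSnd χ (D a) = evalSnd χ (flipA k A (D a)) * evalSnd χ R := by
  rw [← map_mul, h.intertwines, map_mul]

lemma evalSnd_mul_eq_neg_of_skewPrimitive_right {a g : A} (ha : D a = 1 ⊗ₜ[k] a + a ⊗ₜ[k] g)
    (hχa : χ a = 0) (hχg : χ g = -1) : evalSnd χ R * a = -(a * evalSnd χ R) := by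
  simpa [ha, hχa, hχg, neg_eq_iff_eq_neg] using h.evalSnd_mul_evalSnd_coproduct (χ := χ) a

lemma evalSnd_mul_eq_neg_of_skewPrimitive_left {a g : A} (ha : D a = g ⊗ₜ[k] a + a ⊗ₜ[k] 1)
    (hχa : χ a = 0) (hχg : χ g = -1) : evalSnd χ R * a = -(a * evalSnd χ R) := by
  simpa [ha, hχa, hχg] using h.evalSnd_mul_evalSnd_coproduct (χ := χ) a

lemma coproduct_evalSnd (hΦ : IsUnit Φ) (hχ : IsTrivialAt χ Φ) :
    D (evalSnd χ R) = evalSnd χ R ⊗ₜ[k] evalSnd χ R := by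
  rw [← evalThd_copL, h.hexagon_left]
  simp only [map_mul, evalThd_emb13, evalThd_emb23, hχ.second,
    map_ringInverse_eq_one (isUnit_perm231 hΦ) hχ.first, map_ringInverse_eq_one hΦ hχ.third,
    Algebra.TensorProduct.tmul_mul_tmul, one_mul, mul_one]

lemma evalSnd_conv (hΦ : IsUnit Φ) (hψ : IsTrivialAt ψ Φ) :
    evalSnd (conv D χ ψ) R = evalSnd ψ R * evalSnd χ R := by
  rw [← evalSnd_evalThd_copR, h.hexagon_right]
  simp only [map_mul, evalThd_emb12, evalThd_emb13, hψ.third, hψ.evalThd_perm312,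
    map_ringInverse_eq_one (isUnit_perm213 hΦ) hψ.evalThd_perm213, evalSnd_tmul, map_one,
    one_smul, one_mul, mul_one]

lemma evalSnd_mul_self_eq_one {η : A →ₐ[k] k} (hΦ : IsUnit Φ) (hχ : IsTrivialAt χ Φ)
    (hηχ : conv D η χ = χ) (hχχ : conv D χ χ = η) : evalSnd χ R * evalSnd χ R = 1 := by
  have hη : evalSnd χ R * evalSnd η R = evalSnd χ R := by rw [← h.evalSnd_conv hΦ hχ, hηχ]
  rw [← h.evalSnd_conv hΦ hχ, hχχ]
  exact (h.isUnit.map (evalSnd χ)).mul_eq_left.mp hη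

end IsRMatrix

end RMatrix

section Actions

variable {k A : Type} [Field k] [Ring A] [Algebra k A]

/-- The subalgebra of the elements `a` that act on the vector `v` by the scalar `χ a`. -/
def eigenSubalgebra {V : Type*} [AddCommGroup V] [Module k V] (f : A →ₐ[k] Module.End k V)
    (χ : A →ₐ[k] k) (v : V) : Subalgebra k A where
  carrier := {a | f a v = χ a • v}
  mul_mem' {a b} ha hb := by
    rw [Set.mem_ofPred_eq] at ha hb ⊢
    rw [map_mul, map_mul, Module.End.mul_apply, hb, map_smul, ha, smul_smul, mul_comm]
  add_mem' {a b} ha hb := by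
    rw [Set.mem_ofPred_eq] at ha hb ⊢
    rw [map_add, map_add, LinearMap.add_apply, ha, hb, add_smul]
  algebraMap_mem' c := by simp

lemma mem_eigenSubalgebra {V : Type*} [AddCommGroup V] [Module k V] {f : A →ₐ[k] Module.End k V}
    {χ : A →ₐ[k] k} {v : V} {a : A} : a ∈ eigenSubalgebra f χ v ↔ f a v = χ a • v := Iff.rfl

/-- The tensor square of a matrix representation `ρ`, with the tensor square of the space of column
vectors encoded as square matrices: `a ⊗ b` acts by `S ↦ ρ(a) S ρ(b)ᵀ`. -/
def tensorSquareRep {n : Type*} [Fintype n] [DecidableEq n] (ρ : A →ₐ[k] Matrix n n k) :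
    TP2 k A →ₐ[k] Module.End k (Matrix n n k) :=
  Algebra.TensorProduct.lift ((Algebra.lmul k (Matrix n n k)).comp ρ)
    (((Algebra.lsmul k k (Matrix n n k) : (Matrix n n k)ᵐᵒᵖ →ₐ[k] Module.End k (Matrix n n k)).comp
      (Matrix.transposeAlgEquiv n k k).toAlgHom).comp ρ)
    fun a b ↦ LinearMap.ext fun S ↦ (mul_assoc (ρ a) S (ρ b).transpose).symm

lemma tensorSquareRep_tmul {n : Type*} [Fintype n] [DecidableEq n] (ρ : A →ₐ[k] Matrix n n k)
    (a b : A) (S : Matrix n n k) :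
    tensorSquareRep ρ (a ⊗ₜ[k] b) S = ρ a * S * (ρ b).transpose := by
  exact (mul_assoc (ρ a) S (ρ b).transpose).symm

end Actions

section RestrictedQuantumGroup

/-- The elements `E`, `F`, `K`, `Kinv` of an algebra satisfy the defining relations of `Q`. -/
structure QRelations {B : Type*} [Ring B] [Algebra ℂ B] (E F K Kinv : B) : Prop where
  K_mul_Kinv : K * Kinv = 1
  Kinv_mul_K : Kinv * K = 1
  K_mul_E_mul_Kinv : K * E * Kinv = -E
  K_mul_F_mul_Kinv : K * F * Kinv = -F
  commutator : E * F - F * E = (2 * Complex.I)⁻¹ • (K - Kinv)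
  E_sq : E ^ 2 = 0
  F_sq : F ^ 2 = 0
  K_pow_four : K ^ 4 = 1

namespace QRelations

variable {B : Type*} [Ring B] [Algebra ℂ B] {E F K Kinv : B} (h : QRelations E F K Kinv)

include h

lemma Kinv_eq_pow : Kinv = K ^ 3 :=
  left_inv_eq_right_inv h.Kinv_mul_K (by rw [← pow_succ', h.K_pow_four])

lemma map {C : Type*} [Ring C] [Algebra ℂ C] (f : B →ₐ[ℂ] C) :
    QRelations (f E) (f F) (f K) (f Kinv) where
  K_mul_Kinv := by rw [← map_mul, h.K_mul_Kinv, map_one]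
  Kinv_mul_K := by rw [← map_mul, h.Kinv_mul_K, map_one]
  K_mul_E_mul_Kinv := by rw [← map_mul, ← map_mul, h.K_mul_E_mul_Kinv, map_neg]
  K_mul_F_mul_Kinv := by rw [← map_mul, ← map_mul, h.K_mul_F_mul_Kinv, map_neg]
  commutator := by
    rw [← map_mul, ← map_mul, ← map_sub, h.commutator, map_smul, map_sub]
  E_sq := by rw [← map_pow, h.E_sq, map_zero]
  F_sq := by rw [← map_pow, h.F_sq, map_zero]
  K_pow_four := by rw [← map_pow, h.K_pow_four, map_one]

/-- The algebra homomorphism from `Q` given by the values of the generators. -/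
def lift : Q →ₐ[ℂ] B :=
  RingQuot.liftAlgHom ℂ ⟨FreeAlgebra.lift ℂ fun
    | .E => E
    | .F => F
    | .K => K
    | .Kinv => Kinv, by
    rintro _ _ (_ | _)
    all_goals simp only [map_mul, map_sub, map_neg, map_smul, map_pow, map_one, map_zero,
      ιE, ιF, ιK, ιKi, FreeAlgebra.lift_ι_apply]
    exacts [h.K_mul_Kinv, h.Kinv_mul_K, h.K_mul_E_mul_Kinv, h.K_mul_F_mul_Kinv, h.commutator,
      h.E_sq, h.F_sq, h.K_pow_four]⟩

@[simp]
lemma lift_gE : h.lift gE = E := by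
  simp [lift, gE, ιE]

@[simp]
lemma lift_gF : h.lift gF = F := by
  simp [lift, gF, ιF]

@[simp]
lemma lift_gK : h.lift gK = K := by
  simp [lift, gK, ιK]

@[simp]
lemma lift_gKi : h.lift gKi = Kinv := by
  simp [lift, gKi, ιKi]

end QRelations

lemma QRelations.K_sq_eq_one_of_comm {B : Type*} [CommRing B] [Algebra ℂ B] {E F K Kinv : B}
    (h : QRelations E F K Kinv) : K ^ 2 = 1 := by
  have hcomm : (2 * Complex.I)⁻¹ • (K - Kinv) = 0 := by
    rw [← h.commutator, mul_comm, sub_self]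
  have hK : K = Kinv := sub_eq_zero.mp ((smul_eq_zero_iff_right (by simp)).mp hcomm)
  calc K ^ 2 = K * Kinv := by rw [sq, ← hK]
    _ = 1 := h.K_mul_Kinv

lemma qRelations_generators : QRelations gE gF gK gKi where
  K_mul_Kinv := by simpa [gK, gKi] using RingQuot.mkAlgHom_rel ℂ QRel.KKi
  Kinv_mul_K := by simpa [gK, gKi] using RingQuot.mkAlgHom_rel ℂ QRel.KiK
  K_mul_E_mul_Kinv := by simpa [gK, gKi, gE] using RingQuot.mkAlgHom_rel ℂ QRel.KEKi
  K_mul_F_mul_Kinv := by simpa [gK, gKi, gF] using RingQuot.mkAlgHom_rel ℂ QRel.KFKi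
  commutator := by
    simpa only [gE, gF, gK, gKi, map_sub, map_mul, map_smul] using
      RingQuot.mkAlgHom_rel ℂ QRel.EF
  E_sq := by simpa [gE] using RingQuot.mkAlgHom_rel ℂ QRel.Esq
  F_sq := by simpa [gF] using RingQuot.mkAlgHom_rel ℂ QRel.Fsq
  K_pow_four := by simpa [gK] using RingQuot.mkAlgHom_rel ℂ QRel.K4

lemma adjoin_gE_gF_gK : Algebra.adjoin ℂ {gE, gF, gK} = (⊤ : Subalgebra ℂ Q) := by
  have hsurj := (AlgHom.range_eq_top _).mpr (RingQuot.mkAlgHom_surjective ℂ QRel)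
  rw [← Algebra.map_top, ← FreeAlgebra.adjoin_range_ι, AlgHom.map_adjoin] at hsurj
  rw [eq_top_iff, ← hsurj, Algebra.adjoin_le_iff]
  rintro _ ⟨_, ⟨g, rfl⟩, rfl⟩
  cases g with
  | E => exact Algebra.subset_adjoin (.inl rfl)
  | F => exact Algebra.subset_adjoin (.inr (.inl rfl))
  | K => exact Algebra.subset_adjoin (.inr (.inr rfl))
  | Kinv =>
    change gKi ∈ _
    rw [qRelations_generators.Kinv_eq_pow]
    exact pow_mem (Algebra.subset_adjoin (.inr (.inr rfl))) 3

lemma algHom_ext_generators {B : Type*} [Semiring B] [Algebra ℂ B] {f g : Q →ₐ[ℂ] B}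
    (hE : f gE = g gE) (hF : f gF = g gF) (hK : f gK = g gK) : f = g := by
  refine AlgHom.ext_of_adjoin_eq_top adjoin_gE_gF_gK ?_
  rintro _ (rfl | rfl | rfl)
  exacts [hE, hF, hK]

lemma isIdempotentElem_e1 : IsIdempotentElem e1 := by
  have hK : gK ^ 2 * gK ^ 2 = 1 := by rw [← pow_add, qRelations_generators.K_pow_four]
  rw [IsIdempotentElem, e1, smul_mul_smul_comm, sub_mul, mul_sub, mul_sub, hK, one_mul, one_mul,
    mul_one]
  module

lemma map_e1_eq_zero {B : Type*} [CommRing B] [Algebra ℂ B] (χ : Q →ₐ[ℂ] B) : χ e1 = 0 := by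
  rw [e1, map_smul, map_sub, map_one, map_pow, (qRelations_generators.map χ).K_sq_eq_one_of_comm,
    sub_self, smul_zero]

/-- The element `Φ_ε`, for an arbitrary complex parameter in place of the sign `ε`. -/
def phiEps (ep : ℂ) : TP3 ℂ Q := 1 + (ep - 1) • t3 e1 e1 e1

lemma isUnit_phiEps {ep : ℂ} (hep : ep ≠ 0) : IsUnit (phiEps ep) := by
  refine isUnit_one_add_smul ?_ hep
  simp only [IsIdempotentElem, t3, Algebra.TensorProduct.tmul_mul_tmul, isIdempotentElem_e1.eq]

lemma isTrivialAt_phiEps (ep : ℂ) (χ : Q →ₐ[ℂ] ℂ) : IsTrivialAt χ (phiEps ep) where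
  first := by
    simp [phiEps, perm231, t3, Algebra.TensorProduct.one_def, map_e1_eq_zero]
  second := by
    simp [phiEps, perm132, t3, Algebra.TensorProduct.one_def, map_e1_eq_zero]
  third := by
    simp [phiEps, t3, map_e1_eq_zero]

lemma qRelations_signChar (s : ℤˣ) : QRelations (0 : ℂ) 0 (s : ℤ) (s : ℤ) := by
  rcases Int.units_eq_one_or s with rfl | rfl <;> constructor <;> norm_num

/-- The one-dimensional representation `E, F ↦ 0`, `K ↦ s` for a sign `s`; the counit is
`signChar 1`. -/
def signChar (s : ℤˣ) : Q →ₐ[ℂ] ℂ := (qRelations_signChar s).lift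

lemma qRelations_fundamentalRep :
    QRelations (!![0, 1; 0, 0] : Matrix (Fin 2) (Fin 2) ℂ) !![0, 0; 1, 0]
      !![Complex.I, 0; 0, -Complex.I] !![-Complex.I, 0; 0, Complex.I] := by
  constructor
  case commutator =>
    ext i j
    fin_cases i <;> fin_cases j <;> simp <;> field_simp <;> norm_num
  all_goals
    ext i j
    fin_cases i <;> fin_cases j <;> simp [pow_succ]

/-- The two-dimensional simple representation of highest weight `i`. -/
def fundamentalRep : Q →ₐ[ℂ] Matrix (Fin 2) (Fin 2) ℂ := qRelations_fundamentalRep.lift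

/-- The invariant vector of the tensor square of `fundamentalRep`, as a matrix. -/
def invariantVector : Matrix (Fin 2) (Fin 2) ℂ := !![0, -Complex.I; 1, 0]

lemma eq_smul_diag_of_anticommute {R : Type*} [CommRing R] {X : Matrix (Fin 2) (Fin 2) R}
    (hE : X * !![0, 1; 0, 0] = -(!![0, 1; 0, 0] * X))
    (hF : X * !![0, 0; 1, 0] = -(!![0, 0; 1, 0] * X)) :
    X = X 0 0 • !![1, 0; 0, -1] := by
  have h00 : X 0 0 = -X 1 1 := by
    simpa [Matrix.vecMul, dotProduct, Matrix.mul_apply, Fin.sum_univ_two] using congrFun₂ hE 0 1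
  have h10 : X 1 0 = 0 := by
    simpa [Matrix.vecMul, dotProduct, Matrix.mul_apply, Fin.sum_univ_two] using congrFun₂ hE 0 0
  have h01 : X 0 1 = 0 := by
    simpa [Matrix.vecMul, dotProduct, Matrix.mul_apply, Fin.sum_univ_two] using congrFun₂ hF 0 0
  ext i j
  fin_cases i <;> fin_cases j <;> simp [h00, h10, h01]

lemma mul_invariantVector_mul_transpose {X : Matrix (Fin 2) (Fin 2) ℂ}
    (hE : X * !![0, 1; 0, 0] = -(!![0, 1; 0, 0] * X))
    (hF : X * !![0, 0; 1, 0] = -(!![0, 0; 1, 0] * X)) (hX : X * X = 1) :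
    X * invariantVector * X.transpose = -invariantVector := by
  obtain ⟨a, rfl⟩ : ∃ a : ℂ, X = a • !![1, 0; 0, -1] := ⟨_, eq_smul_diag_of_anticommute hE hF⟩
  have ha : a * a = 1 := by simpa using congrFun₂ hX 0 0
  ext i j
  fin_cases i <;> fin_cases j <;>
    simp [invariantVector, Matrix.mul_apply, Fin.sum_univ_two, mul_right_comm a Complex.I a, ha]

section Coproduct

variable {Δ : Q →ₐ[ℂ] TP2 ℂ Q}
  (hΔE : Δ gE = (1 : Q) ⊗ₜ[ℂ] gE + gE ⊗ₜ[ℂ] gK)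
  (hΔF : Δ gF = gKi ⊗ₜ[ℂ] gF + gF ⊗ₜ[ℂ] (1 : Q))
  (hΔK : Δ gK = gK ⊗ₜ[ℂ] gK)

include hΔE hΔF hΔK

lemma conv_signChar (s t : ℤˣ) : conv Δ (signChar s) (signChar t) = signChar (s * t) := by
  apply algHom_ext_generators <;> simp [hΔE, hΔF, hΔK, signChar, mul_comm]

lemma tensorSquareRep_coproduct_invariantVector (a : Q) :
    tensorSquareRep fundamentalRep (Δ a) invariantVector = signChar 1 a • invariantVector := by
  suffices h : Algebra.adjoin ℂ {gE, gF, gK} ≤ eigenSubalgebra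
      ((tensorSquareRep fundamentalRep).comp Δ) (signChar 1) invariantVector from
    h (adjoin_gE_gF_gK ▸ Algebra.mem_top)
  rw [Algebra.adjoin_le_iff]
  rintro _ (rfl | rfl | rfl) <;>
  · simp only [SetLike.mem_coe, mem_eigenSubalgebra, AlgHom.comp_apply, hΔE, hΔF, hΔK,
      map_add, LinearMap.add_apply, tensorSquareRep_tmul]
    ext i j
    fin_cases i <;> fin_cases j <;>
      simp [Matrix.vecMul, dotProduct, fundamentalRep, signChar, invariantVector,
        Matrix.mul_apply, Fin.sum_univ_two]

lemma coproduct_ne_tmul_self {x : Q} (hE : x * gE = -(gE * x)) (hF : x * gF = -(gF * x))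
    (hx : x * x = 1) : Δ x ≠ x ⊗ₜ[ℂ] x := by
  intro grouplike
  let ρ := fundamentalRep
  have counit : signChar 1 x = 1 := by
    have h := conv_apply_of_grouplike grouplike (signChar (-1)) (signChar (-1))
    rwa [conv_signChar hΔE hΔF hΔK, ← map_mul, hx, map_one] at h
  have fixes : ρ x * invariantVector * (ρ x).transpose = invariantVector := by
    rw [← tensorSquareRep_tmul, ← grouplike,
      tensorSquareRep_coproduct_invariantVector hΔE hΔF hΔK, counit, one_smul]
  have negates : ρ x * invariantVector * (ρ x).transpose = -invariantVector := by
    apply mul_invariantVector_mul_transpose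
    · simpa [ρ, fundamentalRep] using congrArg ρ hE
    · simpa [ρ, fundamentalRep] using congrArg ρ hF
    · rw [← map_mul, hx, map_one]
  have h := congrFun₂ (fixes.symm.trans negates) 1 0
  norm_num [invariantVector, eq_neg_iff_add_eq_zero] at h

theorem statement4_general {Φ : TP3 ℂ Q} (hΦ : IsUnit Φ) (hχ : IsTrivialAt (signChar (-1)) Φ) :
    ¬ ∃ R : TP2 ℂ Q, IsRMatrix Δ Φ R := by
  rintro ⟨R, hR⟩
  let x := evalSnd (signChar (-1)) R
  have grouplike : Δ x = x ⊗ₜ[ℂ] x := hR.coproduct_evalSnd hΦ hχ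
  have sq : x * x = 1 :=
    hR.evalSnd_mul_self_eq_one hΦ hχ (conv_signChar hΔE hΔF hΔK 1 (-1))
      (conv_signChar hΔE hΔF hΔK (-1) (-1))
  have xE : x * gE = -(gE * x) :=
    hR.evalSnd_mul_eq_neg_of_skewPrimitive_right hΔE (by simp [signChar]) (by simp [signChar])
  have xF : x * gF = -(gF * x) :=
    hR.evalSnd_mul_eq_neg_of_skewPrimitive_left hΔF (by simp [signChar]) (by simp [signChar])
  exact coproduct_ne_tmul_self hΔE hΔF hΔK xE xF sq grouplike

end Coproduct

end RestrictedQuantumGroup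

/-- for `ε = ±1`, the quasi-bialgebra `(Q, Φ_ε)` with
`Φ_ε = 1⊗1⊗1 + (ε−1)·e₁⊗e₁⊗e₁` is not quasi-triangular. -/
theorem statement4 (Δ : Q →ₐ[ℂ] TP2 ℂ Q)
    (hΔE : Δ gE = (1:Q) ⊗ₜ[ℂ] gE + gE ⊗ₜ[ℂ] gK)
    (hΔF : Δ gF = gKi ⊗ₜ[ℂ] gF + gF ⊗ₜ[ℂ] (1:Q))
    (hΔK : Δ gK = gK ⊗ₜ[ℂ] gK)
    (ep : ℂ) (hep : ep = 1 ∨ ep = -1) :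
    ¬ ∃ R : TP2 ℂ Q, IsUnit R ∧
      (∀ a : Q, R * Δ a = flipA ℂ Q (Δ a) * R) ∧
      copL Δ R =
        Ring.inverse (perm231 ℂ Q (1 + (ep - 1) • t3 e1 e1 e1)) * emb13 ℂ Q R *
          perm132 ℂ Q (1 + (ep - 1) • t3 e1 e1 e1) * emb23 ℂ Q R *
          Ring.inverse ((1 : TP3 ℂ Q) + (ep - 1) • t3 e1 e1 e1) ∧
      copR Δ R =
        perm312 ℂ Q (1 + (ep - 1) • t3 e1 e1 e1) * emb13 ℂ Q R *
          Ring.inverse (perm213 ℂ Q (1 + (ep - 1) • t3 e1 e1 e1)) * emb12 ℂ Q R *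
          ((1 : TP3 ℂ Q) + (ep - 1) • t3 e1 e1 e1) := by
  rintro ⟨R, hu, hR, hL, hR'⟩
  exact statement4_general hΔE hΔF hΔK (isUnit_phiEps (by rcases hep with rfl | rfl <;> simp))
    (isTrivialAt_phiEps ep _) ⟨R, hu, hR, hL, hR'⟩
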